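/- Let 0 < γ < β ≤ n and p > γ/β, and f ∈ L^p(H^γ_∞). Then there exists C = C(γ,β,n,p) > 0 such that ∫ (M_{H^β_∞} f)^p dH^γ_∞ ≤ C ∫ |f|^p dH^γ_∞. -/

import Mathlib

open scoped ENNReal
open Metric Set MeasureTheory

noncomputable section

/-- `ℝⁿ` as Euclidean space. -/
abbrev Rn (n : ℕ) := EuclideanSpace ℝ (Fin n)

/-- The Choquet integral of a nonnegative function `g` with respect to a
(monotone) set function `C`: `∫ g dC := ∫_0^∞ C({g > t}) dt`. -/
noncomputable def choquet {X : Type*} (C : Set X → ℝ≥0∞) (g : X → ℝ≥0∞) : ℝ≥0∞ :=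
  ∫⁻ t in Ioi (0 : ℝ), C {x | ENNReal.ofReal t < g x}

/-- The Choquet integral of `g` restricted to a set `A`. -/
noncomputable def choquetOn {X : Type*} (C : Set X → ℝ≥0∞) (A : Set X) (g : X → ℝ≥0∞) : ℝ≥0∞ :=
  ∫⁻ t in Ioi (0 : ℝ), C {x | x ∈ A ∧ ENNReal.ofReal t < g x}

/-- The `L^∞(C)` norm: `inf {λ > 0 : C({|f| > λ}) = 0}` (formulated in `ℝ≥0∞`). -/
noncomputable def choquetEssSup {X : Type*} (C : Set X → ℝ≥0∞) (f : X → ℝ) : ℝ≥0∞ :=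
  sInf {l : ℝ≥0∞ | C {x | l < ENNReal.ofReal |f x|} = 0}

/-- `C`-quasicontinuity of a function `f`. -/
def QuasiCont {X : Type*} [TopologicalSpace X] (C : Set X → ℝ≥0∞) (f : X → ℝ) : Prop :=
  ∀ ε : ℝ≥0∞, 0 < ε → ∃ U : Set X, IsOpen U ∧ C U < ε ∧ ContinuousOn f Uᶜ

/-- Membership in the capacitary space `L^p(C)`: `C`-quasicontinuous with
finite `p`-th power Choquet integral. -/
def MemChoquetLp {X : Type*} [TopologicalSpace X] (C : Set X → ℝ≥0∞) (p : ℝ) (f : X → ℝ) : Prop :=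
  QuasiCont C f ∧ choquet C (fun x => ENNReal.ofReal |f x| ^ p) < ∞

/-- The normalization constant `ω_β = π^{β/2}/Γ(β/2+1)`. -/
noncomputable def omegaC (β : ℝ) : ℝ≥0∞ :=
  ENNReal.ofReal (Real.pi ^ (β / 2) / Real.Gamma (β / 2 + 1))

/-- The `β`-dimensional Hausdorff content `H^β_∞`, defined via countable
coverings by balls: `inf {∑ ω_β r_i^β : E ⊆ ⋃ B(x_i, r_i)}`. -/
noncomputable def hContent (n : ℕ) (β : ℝ) (E : Set (Rn n)) : ℝ≥0∞ :=
  ⨅ (c : ℕ → Rn n × ℝ) (_ : E ⊆ ⋃ i, ball (c i).1 (c i).2),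
    ∑' i, omegaC β * ENNReal.ofReal ((c i).2 ^ β)

/-- The centered Hausdorff content maximal function
`M_{H^β_∞} g(x) := sup_{r>0} (1/(ω_β r^β)) ∫_{B(x,r)} g dH^β_∞`. -/
noncomputable def maximalH (n : ℕ) (β : ℝ) (g : Rn n → ℝ≥0∞) (x : Rn n) : ℝ≥0∞ :=
  ⨆ (r : ℝ) (_ : 0 < r),
    (omegaC β * ENNReal.ofReal (r ^ β))⁻¹ * choquetOn (hContent n β) (ball x r) g

lemma omegaC_ne_zero {β : ℝ} (hβ : 0 < β) : omegaC β ≠ 0 := by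
  have : 0 < Real.pi ^ (β / 2) / Real.Gamma (β / 2 + 1) :=
    div_pos (Real.rpow_pos_of_pos Real.pi_pos _) (Real.Gamma_pos_of_pos (by positivity))
  simpa [omegaC] using this

lemma omegaC_ne_top (β : ℝ) : omegaC β ≠ ∞ := ENNReal.ofReal_ne_top

lemma hContent_mono {n : ℕ} {β : ℝ} {E F : Set (Rn n)} (h : E ⊆ F) :
    hContent n β E ≤ hContent n β F :=
  le_iInf₂ fun c hc => iInf₂_le c (h.trans hc)

lemma hContent_le_tsum {n : ℕ} {β : ℝ} (hβ : 0 < β) {ι : Type*} [Countable ι] {E : Set (Rn n)}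
    (c : ι → Rn n) (r : ι → ℝ) (hE : E ⊆ ⋃ i, ball (c i) (r i)) :
    hContent n β E ≤ ∑' i, omegaC β * ENNReal.ofReal (r i ^ β) := by
  obtain ⟨φ, hφ⟩ := exists_injective_nat ι
  let d : ℕ → Rn n × ℝ := Function.extend φ (fun i => (c i, r i)) 0
  have hd : ∀ i, d (φ i) = (c i, r i) := fun i => hφ.extend_apply _ _ i
  refine (iInf₂_le d ?_).trans (le_of_eq ?_)
  · refine hE.trans (iUnion_subset fun i => ?_)
    refine Subset.trans ?_ (subset_iUnion _ (φ i))
    rw [hd]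
  · rw [← tsum_extend_zero hφ]
    refine tsum_congr fun k => ?_
    by_cases hk : ∃ i, φ i = k
    · obtain ⟨i, rfl⟩ := hk
      rw [hφ.extend_apply, hd]
    · have : d k = 0 := Function.extend_apply' _ _ _ hk
      rw [this, Function.extend_apply' _ _ _ hk]
      simp [Real.zero_rpow hβ.ne']

lemma exists_cover_of_hContent_lt {n : ℕ} {β : ℝ} (hβ : 0 < β) {E : Set (Rn n)} {b : ℝ≥0∞}
    (h : hContent n β E < b) :
    ∃ (c : ℕ → Rn n) (r : ℕ → ℝ), (∀ i, 0 ≤ r i) ∧ E ⊆ ⋃ i, ball (c i) (r i) ∧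
      ∑' i, omegaC β * ENNReal.ofReal (r i ^ β) < b := by
  simp only [hContent, iInf_lt_iff] at h
  obtain ⟨d, hd, hb⟩ := h
  refine ⟨fun i => (d i).1, fun i => max (d i).2 0, fun i => le_max_right _ _, ?_, ?_⟩
  · exact hd.trans (iUnion_mono fun i => ball_subset_ball (le_max_left _ _))
  · refine lt_of_le_of_lt (ENNReal.tsum_le_tsum fun i => ?_) hb
    refine mul_le_mul_right ?_ _
    dsimp only
    rcases le_total 0 (d i).2 with h0 | h0
    · rw [max_eq_left h0]
    · rw [max_eq_right h0, Real.zero_rpow hβ.ne']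
      simp

lemma hContent_iUnion_le {n : ℕ} {β : ℝ} (hβ : 0 < β) {ι : Type*} [Countable ι]
    (E : ι → Set (Rn n)) : hContent n β (⋃ i, E i) ≤ ∑' i, hContent n β (E i) := by
  refine ENNReal.le_of_forall_pos_le_add fun ε hε hfin => ?_
  obtain ⟨δ, hδ, hδε⟩ := ENNReal.exists_pos_sum_of_countable'
    (ENNReal.coe_pos.2 hε).ne' ι
  have hlt : ∀ i, hContent n β (E i) < hContent n β (E i) + δ i := fun i =>
    ENNReal.lt_add_right (ENNReal.ne_top_of_tsum_ne_top hfin.ne i) (hδ i).ne'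
  choose c r _ hcov hsum using fun i => exists_cover_of_hContent_lt hβ (hlt i)
  calc hContent n β (⋃ i, E i)
      ≤ ∑' q : ι × ℕ, omegaC β * ENNReal.ofReal (r q.1 q.2 ^ β) := by
        refine hContent_le_tsum hβ (fun q : ι × ℕ => c q.1 q.2) (fun q => r q.1 q.2) ?_
        refine iUnion_subset fun i x hx => ?_
        obtain ⟨j, hj⟩ := mem_iUnion.1 (hcov i hx)
        exact mem_iUnion.2 ⟨(i, j), hj⟩
    _ = ∑' i, ∑' j, omegaC β * ENNReal.ofReal (r i j ^ β) :=
        ENNReal.tsum_prod (f := fun i j => omegaC β * ENNReal.ofReal (r i j ^ β))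
    _ ≤ ∑' i, (hContent n β (E i) + δ i) := ENNReal.tsum_le_tsum fun i => (hsum i).le
    _ = ∑' i, hContent n β (E i) + ∑' i, δ i := ENNReal.tsum_add
    _ ≤ ∑' i, hContent n β (E i) + ε := by gcongr

lemma hContent_union_le {n : ℕ} {β : ℝ} (hβ : 0 < β) (E F : Set (Rn n)) :
    hContent n β (E ∪ F) ≤ hContent n β E + hContent n β F := by
  rw [union_eq_iUnion]
  refine (hContent_iUnion_le hβ _).trans (le_of_eq ?_)
  simp

lemma hContent_ball_le {n : ℕ} {β : ℝ} (hβ : 0 < β) (x : Rn n) (r : ℝ) :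
    hContent n β (ball x r) ≤ omegaC β * ENNReal.ofReal (r ^ β) := by
  simpa using hContent_le_tsum hβ (fun _ : Unit => x) (fun _ => r)
    (subset_iUnion (fun _ : Unit => ball x r) ())

/-- The Hausdorff content maximal function of the indicator of `A`. -/
noncomputable def setMaximal (n : ℕ) (β : ℝ) (A : Set (Rn n)) (x : Rn n) : ℝ≥0∞ :=
  ⨆ (r : ℝ) (_ : 0 < r),
    (omegaC β * ENNReal.ofReal (r ^ β))⁻¹ * hContent n β (ball x r ∩ A)

lemma omegaC_mul_ne_zero {β r : ℝ} (hβ : 0 < β) (hr : 0 < r) :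
    omegaC β * ENNReal.ofReal (r ^ β) ≠ 0 :=
  mul_ne_zero (omegaC_ne_zero hβ) (by simpa using Real.rpow_pos_of_pos hr β)

lemma omegaC_mul_ne_top (β r : ℝ) : omegaC β * ENNReal.ofReal (r ^ β) ≠ ∞ :=
  ENNReal.mul_ne_top (omegaC_ne_top β) ENNReal.ofReal_ne_top

lemma setMaximal_le_one {n : ℕ} {β : ℝ} (hβ : 0 < β) (A : Set (Rn n)) (x : Rn n) :
    setMaximal n β A x ≤ 1 := by
  refine iSup₂_le fun r hr => ?_
  calc _ ≤ (omegaC β * ENNReal.ofReal (r ^ β))⁻¹ * (omegaC β * ENNReal.ofReal (r ^ β)) := by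
        gcongr
        exact (hContent_mono inter_subset_left).trans (hContent_ball_le hβ x r)
    _ = 1 := ENNReal.inv_mul_cancel (omegaC_mul_ne_zero hβ hr) (omegaC_mul_ne_top β r)

lemma ENNReal.tsum_rpow_le_rpow_tsum {ι : Type*} (a : ι → ℝ≥0∞) {e : ℝ} (he : 1 ≤ e) :
    ∑' i, a i ^ e ≤ (∑' i, a i) ^ e := by
  have h : ∀ t : ℝ≥0∞, t ^ e = t * t ^ (e - 1) := fun t => by
    conv_rhs => enter [1]; rw [← ENNReal.rpow_one t]
    rw [← ENNReal.rpow_add_of_nonneg _ _ zero_le_one (by linarith)]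
    congr 1; ring
  calc ∑' i, a i ^ e ≤ ∑' i, a i * (∑' j, a j) ^ (e - 1) := by
        refine ENNReal.tsum_le_tsum fun i => ?_
        rw [h]
        exact mul_le_mul_right (ENNReal.rpow_le_rpow (ENNReal.le_tsum i) (by linarith)) _
    _ = (∑' i, a i) ^ e := by rw [ENNReal.tsum_mul_right, ← h]

/-- The sum of the point masses `r i ^ γ` at `c i`. -/
noncomputable def radiusMeasure {n : ℕ} (γ : ℝ) (c : ℕ → Rn n) (r : ℕ → ℝ) : Measure (Rn n) :=
  Measure.sum fun j => ENNReal.ofReal (r j ^ γ) • Measure.dirac (c j)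

lemma radiusMeasure_univ {n : ℕ} (γ : ℝ) (c : ℕ → Rn n) (r : ℕ → ℝ) :
    radiusMeasure γ c r univ = ∑' j, ENNReal.ofReal (r j ^ γ) := by
  simp [radiusMeasure, Measure.sum_apply _ MeasurableSet.univ]

lemma tsum_subtype_le_radiusMeasure {n : ℕ} (γ : ℝ) (c : ℕ → Rn n) (r : ℕ → ℝ) {J : Set ℕ}
    {S : Set (Rn n)} (hS : MeasurableSet S) (hJ : ∀ j ∈ J, c j ∈ S) :
    ∑' j : J, ENNReal.ofReal (r j ^ γ) ≤ radiusMeasure γ c r S := by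
  rw [radiusMeasure, Measure.sum_apply _ hS, tsum_subtype J fun j => ENNReal.ofReal (r j ^ γ)]
  refine ENNReal.tsum_le_tsum fun j => ?_
  by_cases hj : j ∈ J
  · simp [hj, hJ j hj]
  · simp [hj]

lemma le_radiusMeasure_closedBall {n : ℕ} {γ β s R : ℝ} (hγ : 0 < γ) (hγβ : γ < β) {A : Set (Rn n)}
    {c : ℕ → Rn n} {r : ℕ → ℝ} (hr : ∀ i, 0 ≤ r i) (hA : A ⊆ ⋃ i, ball (c i) (r i))
    (hs : 0 < s) (hR : 0 < R) {x : Rn n} (hx : ∀ j, 2 * r j ≤ dist x (c j))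
    (h : ENNReal.ofReal s ≤
      (omegaC β * ENNReal.ofReal (R ^ β))⁻¹ * hContent n β (ball x R ∩ A)) :
    ENNReal.ofReal (s ^ (γ / β) * R ^ γ) ≤ radiusMeasure γ c r (closedBall x (2 * R)) := by
  have hβ : 0 < β := hγ.trans hγβ
  let J : Set ℕ := {j | (ball (c j) (r j) ∩ ball x R).Nonempty}
  have hJ : ∀ j ∈ J, c j ∈ closedBall x (2 * R) := by
    rintro j ⟨y, hy1, hy2⟩
    rw [mem_ball] at hy1 hy2
    rw [mem_closedBall, dist_comm]
    have h1 := dist_triangle_left x (c j) y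
    have h2 := hx j
    linarith
  have hcov : ball x R ∩ A ⊆ ⋃ j : J, ball (c j) (r j) := by
    rintro y ⟨hy1, hy2⟩
    obtain ⟨j, hj⟩ := mem_iUnion.1 (hA hy2)
    exact mem_iUnion.2 ⟨⟨j, y, hj, hy1⟩, hj⟩
  rw [← ENNReal.mul_le_iff_le_inv (omegaC_mul_ne_zero hβ hR) (omegaC_mul_ne_top β R)] at h
  have h1 : ENNReal.ofReal (R ^ β) * ENNReal.ofReal s ≤ ∑' j : J, ENNReal.ofReal (r j ^ β) := by
    rw [← ENNReal.mul_le_mul_iff_right (omegaC_ne_zero hβ) (omegaC_ne_top β), ← mul_assoc,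
      ← ENNReal.tsum_mul_left]
    exact h.trans (hContent_le_tsum hβ _ _ hcov)
  have h2 : ∑' j : J, ENNReal.ofReal (r j ^ β) ≤
      (∑' j : J, ENNReal.ofReal (r j ^ γ)) ^ (β / γ) := by
    refine le_trans (le_of_eq (tsum_congr fun j => ?_))
      (ENNReal.tsum_rpow_le_rpow_tsum _ ((one_le_div hγ).2 hγβ.le))
    rw [ENNReal.ofReal_rpow_of_nonneg (Real.rpow_nonneg (hr j) _) (by positivity),
      ← Real.rpow_mul (hr j), mul_div_cancel₀ _ hγ.ne']
  refine le_trans ?_ (tsum_subtype_le_radiusMeasure γ c r measurableSet_closedBall hJ)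
  have h3 := ENNReal.rpow_le_rpow (h1.trans h2) (z := γ / β) (by positivity)
  rw [← ENNReal.rpow_mul, div_mul_div_cancel₀ hγ.ne', div_self hβ.ne', ENNReal.rpow_one] at h3
  refine le_trans (le_of_eq ?_) h3
  rw [← ENNReal.ofReal_mul (by positivity), ENNReal.ofReal_rpow_of_nonneg (by positivity)
    (by positivity), Real.mul_rpow (by positivity) hs.le, ← Real.rpow_mul hR.le,
    mul_div_cancel₀ _ hβ.ne', mul_comm]

lemma hContent_setMaximal_gt_le_of_cover {n : ℕ} {γ β s : ℝ} (hγ : 0 < γ) (hγβ : γ < β)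
    {A : Set (Rn n)} {c : ℕ → Rn n} {r : ℕ → ℝ} (hr : ∀ i, 0 ≤ r i)
    (hA : A ⊆ ⋃ i, ball (c i) (r i)) (hs : 0 < s)
    (hfin : ∑' i, ENNReal.ofReal (r i ^ γ) ≠ ∞) :
    hContent n γ {x | ENNReal.ofReal s < setMaximal n β A x} ≤
      ENNReal.ofReal (2 ^ γ + 11 ^ γ * s ^ (-(γ / β))) *
        ∑' i, omegaC γ * ENNReal.ofReal (r i ^ γ) := by
  set μ := radiusMeasure γ c r
  set E := {x | ENNReal.ofReal s < setMaximal n β A x}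
  set G := E \ ⋃ j, ball (c j) (2 * r j)
  have hG : ∀ x ∈ G, ∃ R, 0 < R ∧
      ENNReal.ofReal (s ^ (γ / β) * R ^ γ) ≤ μ (closedBall x (2 * R)) := by
    rintro x ⟨hx1, hx2⟩
    simp only [E, mem_ofPred_eq, setMaximal, lt_iSup_iff] at hx1
    obtain ⟨R, hR, h⟩ := hx1
    refine ⟨R, hR, le_radiusMeasure_closedBall hγ hγβ hr hA hs hR (fun j => ?_) h.le⟩
    by_contra! hj
    exact hx2 (mem_iUnion.2 ⟨j, hj⟩)
  choose! R hR hRμ using hG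
  have hμuniv : μ univ ≠ ∞ := by rwa [radiusMeasure_univ]
  have hbdd : ∀ x ∈ G, 2 * R x ≤ 2 * ((μ univ).toReal / s ^ (γ / β)) ^ γ⁻¹ := by
    intro x hx
    have h1 := (hRμ x hx).trans (measure_mono (subset_univ _))
    rw [ENNReal.ofReal_le_iff_le_toReal hμuniv] at h1
    have h2 : R x ^ γ ≤ (μ univ).toReal / s ^ (γ / β) := by
      rw [le_div_iff₀ (by positivity)]; linarith
    have h3 := Real.rpow_le_rpow (Real.rpow_nonneg (hR x hx).le _) h2 (inv_nonneg.2 hγ.le)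
    rw [Real.rpow_rpow_inv (hR x hx).le hγ.ne'] at h3
    linarith
  obtain ⟨u, huG, hdisj, hu⟩ := Vitali.exists_disjoint_subfamily_covering_enlargement_closedBall
    G (fun x => x) (fun x => 2 * R x) _ hbdd 5 (by norm_num)
  have hcount : u.Countable := hdisj.countable_of_nonempty_interior fun x hx => by
    have := hR x (huG hx)
    exact ⟨x, ball_subset_interior_closedBall (mem_ball_self (by positivity))⟩
  have : Countable u := hcount.to_subtype
  have hGcov : G ⊆ ⋃ x : u, ball (x : Rn n) (11 * R x) := fun y hy => by
    obtain ⟨x, hx, hyx⟩ := hu y hy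
    have h0 := hR x (huG hx)
    have h1 := hR y hy
    refine mem_iUnion.2 ⟨⟨x, hx⟩, closedBall_subset_ball ?_
      (hyx (mem_closedBall_self (by positivity)))⟩
    dsimp only
    linarith
  have hG_le : hContent n γ G ≤
      ENNReal.ofReal (11 ^ γ * s ^ (-(γ / β))) * (omegaC γ * μ univ) := by
    calc hContent n γ G ≤ ∑' x : u, omegaC γ * ENNReal.ofReal ((11 * R x) ^ γ) :=
          hContent_le_tsum hγ _ _ hGcov
      _ ≤ ∑' x : u, ENNReal.ofReal (11 ^ γ * s ^ (-(γ / β))) *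
            (omegaC γ * μ (closedBall (x : Rn n) (2 * R x))) := by
          refine ENNReal.tsum_le_tsum fun x => ?_
          have h0 := hR x (huG x.2)
          have h1 : (11 * R x) ^ γ = 11 ^ γ * s ^ (-(γ / β)) * (s ^ (γ / β) * R x ^ γ) := by
            have := Real.rpow_pos_of_pos hs (γ / β)
            rw [Real.mul_rpow (by norm_num) h0.le, Real.rpow_neg hs.le]
            field_simp
          rw [h1, ENNReal.ofReal_mul (by positivity), mul_left_comm]
          gcongr
          exact hRμ x (huG x.2)
      _ = ENNReal.ofReal (11 ^ γ * s ^ (-(γ / β))) *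
            (omegaC γ * μ (⋃ x : u, closedBall (x : Rn n) (2 * R x))) := by
          rw [ENNReal.tsum_mul_left, ENNReal.tsum_mul_left, measure_iUnion]
          · exact fun x y hxy => hdisj x.2 y.2 (Subtype.coe_injective.ne hxy)
          · exact fun x => measurableSet_closedBall
      _ ≤ _ := by gcongr; exact subset_univ _
  have hnear : hContent n γ (⋃ j, ball (c j) (2 * r j)) ≤
      ENNReal.ofReal (2 ^ γ) * (omegaC γ * μ univ) := by
    refine (hContent_le_tsum hγ _ _ Subset.rfl).trans (le_of_eq ?_)
    rw [radiusMeasure_univ, ← ENNReal.tsum_mul_left, ← ENNReal.tsum_mul_left]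
    refine tsum_congr fun j => ?_
    rw [Real.mul_rpow zero_le_two (hr j), ENNReal.ofReal_mul (by positivity), mul_left_comm]
  calc hContent n γ E ≤ hContent n γ ((⋃ j, ball (c j) (2 * r j)) ∪ G) :=
        hContent_mono (by rw [union_sdiff_self]; exact subset_union_right)
    _ ≤ _ := hContent_union_le hγ _ _
    _ ≤ _ := add_le_add hnear hG_le
    _ = _ := by
      rw [← add_mul, ← ENNReal.ofReal_add (by positivity) (by positivity), radiusMeasure_univ,
        ENNReal.tsum_mul_left]

lemma hContent_setMaximal_gt_le {n : ℕ} {γ β s : ℝ} (hγ : 0 < γ) (hγβ : γ < β)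
    (A : Set (Rn n)) (hs : 0 < s) (hs1 : s ≤ 1) :
    hContent n γ {x | ENNReal.ofReal s < setMaximal n β A x} ≤
      ENNReal.ofReal (2 * 11 ^ γ * s ^ (-(γ / β))) * hContent n γ A := by
  have hβ : 0 < β := hγ.trans hγβ
  have hs2 : 1 ≤ s ^ (-(γ / β)) :=
    Real.one_le_rpow_of_pos_of_le_one_of_nonpos hs hs1 (neg_nonpos.2 (by positivity))
  have hK : (2 : ℝ) ^ γ + 11 ^ γ * s ^ (-(γ / β)) ≤ 2 * 11 ^ γ * s ^ (-(γ / β)) := by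
    have h1 : (2 : ℝ) ^ γ ≤ 11 ^ γ := Real.rpow_le_rpow (by norm_num) (by norm_num) hγ.le
    have h2 : (0 : ℝ) < 11 ^ γ := by positivity
    nlinarith
  have hK0 : ENNReal.ofReal (2 * 11 ^ γ * s ^ (-(γ / β))) ≠ 0 := by
    rw [Ne, ENNReal.ofReal_eq_zero, not_le]; positivity
  rw [mul_comm, ← ENNReal.div_le_iff hK0 ENNReal.ofReal_ne_top]
  refine le_of_forall_gt fun b hb => ?_
  obtain ⟨c, r, hr, hA, hb⟩ := exists_cover_of_hContent_lt hγ hb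
  refine lt_of_le_of_lt ?_ hb
  rw [ENNReal.div_le_iff hK0 ENNReal.ofReal_ne_top, mul_comm]
  refine (hContent_setMaximal_gt_le_of_cover hγ hγβ hr hA hs fun htop => ?_).trans ?_
  · rw [ENNReal.tsum_mul_left, htop, ENNReal.mul_top (omegaC_ne_zero hγ)] at hb
    exact not_top_lt hb
  · gcongr

lemma iUnion_Ico_zpow {a : ℝ} (ha : 1 < a) : ⋃ k : ℤ, Ico (a ^ k) (a ^ (k + 1)) = Ioi 0 := by
  ext t
  simp only [mem_iUnion, mem_Ioi]
  exact ⟨fun ⟨k, hk⟩ => (zpow_pos (by linarith) k).trans_le hk.1,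
    fun ht => exists_mem_Ico_zpow ht ha⟩

lemma setLIntegral_Ioi_le_tsum {φ : ℝ → ℝ≥0∞} (hφ : Antitone φ) {a : ℝ} (ha : 1 < a) :
    ∫⁻ t in Ioi 0, φ t ≤ ∑' k : ℤ, ENNReal.ofReal (a ^ k * (a - 1)) * φ (a ^ k) := by
  rw [← iUnion_Ico_zpow ha]
  refine (lintegral_iUnion_le _ _).trans (ENNReal.tsum_le_tsum fun k => ?_)
  calc ∫⁻ t in Ico (a ^ k) (a ^ (k + 1)), φ t
      ≤ ∫⁻ _ in Ico (a ^ k) (a ^ (k + 1)), φ (a ^ k) :=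
        setLIntegral_mono' measurableSet_Ico fun t ht => hφ ht.1
    _ = _ := by
      rw [setLIntegral_const, Real.volume_Ico, zpow_add_one₀ (by linarith), mul_comm]
      congr 2; ring

lemma tsum_le_setLIntegral_Ioi {φ : ℝ → ℝ≥0∞} (hφ : Antitone φ) {a : ℝ} (ha : 1 < a) :
    ∑' k : ℤ, ENNReal.ofReal (a ^ k * (a - 1)) * φ (a ^ (k + 1)) ≤ ∫⁻ t in Ioi 0, φ t := by
  have hdisj : Pairwise (Function.onFun Disjoint fun k : ℤ => Ico (a ^ k) (a ^ (k + 1))) :=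
    (zpow_right_mono₀ ha.le).pairwise_disjoint_on_Ico_succ
  rw [← iUnion_Ico_zpow ha, lintegral_iUnion (fun _ => measurableSet_Ico) hdisj]
  refine ENNReal.tsum_le_tsum fun k => ?_
  calc _ = ∫⁻ _ in Ico (a ^ k) (a ^ (k + 1)), φ (a ^ (k + 1)) := by
        rw [setLIntegral_const, Real.volume_Ico, zpow_add_one₀ (by linarith), mul_comm]
        congr 2; ring
    _ ≤ _ := setLIntegral_mono' measurableSet_Ico fun t ht => hφ ht.2.le

lemma maximalH_le_tsum (n : ℕ) (β : ℝ) (g : Rn n → ℝ≥0∞) (x : Rn n) :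
    maximalH n β g x ≤ ∑' k : ℤ, ENNReal.ofReal (2 ^ k) *
      setMaximal n β {y | ENNReal.ofReal (2 ^ k) < g y} x := by
  refine iSup₂_le fun r hr => ?_
  have hanti : Antitone fun t : ℝ =>
      hContent n β {y | y ∈ ball x r ∧ ENNReal.ofReal t < g y} := fun s t hst =>
    hContent_mono fun y hy => ⟨hy.1, (ENNReal.ofReal_le_ofReal hst).trans_lt hy.2⟩
  refine (mul_le_mul_right (setLIntegral_Ioi_le_tsum hanti one_lt_two) _).trans ?_
  rw [← ENNReal.tsum_mul_left]
  refine ENNReal.tsum_le_tsum fun k => ?_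
  rw [mul_left_comm, show (2 : ℝ) ^ k * (2 - 1) = 2 ^ k by ring]
  refine mul_le_mul_right ?_ _
  exact le_iSup₂ (f := fun (r : ℝ) (_ : 0 < r) => (omegaC β * ENNReal.ofReal (r ^ β))⁻¹ *
    hContent n β (ball x r ∩ {y | ENNReal.ofReal (2 ^ k) < g y})) r hr

lemma ENNReal.tsum_ofReal_mul_geometric {K ρ : ℝ} (hK : 0 ≤ K) (hρ : 0 ≤ ρ) (hρ1 : ρ < 1) :
    ∑' l : ℕ, ENNReal.ofReal (K * ρ ^ l) = ENNReal.ofReal (K / (1 - ρ)) := by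
  rw [← ENNReal.ofReal_tsum_of_nonneg (fun l => by positivity)
    ((summable_geometric_of_lt_one hρ hρ1).mul_left K), tsum_mul_left,
    tsum_geometric_of_lt_one hρ hρ1, div_eq_mul_inv]

/-- If a dyadic sum of terms in `[0, 1]` exceeds `2 ^ m`, then one of the terms of index at least
`m - 1` exceeds a geometrically small threshold. -/
lemma exists_lt_of_lt_tsum_zpow {u : ℤ → ℝ≥0∞} (hu : ∀ k, u k ≤ 1) {σ : ℝ} (hσ : 0 < σ)
    (hσ2 : 2 * σ < 1) {m : ℤ} (h : ENNReal.ofReal (2 ^ m) < ∑' k, ENNReal.ofReal (2 ^ k) * u k) :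
    ∃ l : ℕ, ENNReal.ofReal ((1 - 2 * σ) * σ ^ l) < u (m - 1 + l) := by
  by_contra! hcon
  refine h.not_ge ?_
  have h2 : (2 : ℝ) ≠ 0 := two_ne_zero
  rw [← (Equiv.addLeft (m - 1)).tsum_eq,
    tsum_of_nat_of_neg_add_one ENNReal.summable ENNReal.summable]
  simp only [Equiv.coe_addLeft]
  have hpos : ∑' l : ℕ, ENNReal.ofReal (2 ^ (m - 1 + (l : ℤ))) * u (m - 1 + l) ≤
      ENNReal.ofReal (2 ^ (m - 1)) := by
    calc _ ≤ ∑' l : ℕ, ENNReal.ofReal (2 ^ (m - 1) * (1 - 2 * σ) * (2 * σ) ^ l) := by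
          refine ENNReal.tsum_le_tsum fun l => (mul_le_mul_right (hcon l) _).trans (le_of_eq ?_)
          rw [← ENNReal.ofReal_mul (by positivity), zpow_add₀ h2, zpow_natCast, mul_pow]
          congr 1; ring
      _ = _ := by
          rw [ENNReal.tsum_ofReal_mul_geometric
            (mul_nonneg (by positivity) (by linarith)) (by positivity) hσ2,
            mul_div_cancel_right₀ _ (by linarith)]
  have hneg : ∑' l : ℕ, ENNReal.ofReal (2 ^ (m - 1 + -((l : ℤ) + 1))) * u (m - 1 + -((l : ℤ) + 1)) ≤
      ENNReal.ofReal (2 ^ (m - 1)) := by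
    calc _ ≤ ∑' l : ℕ, ENNReal.ofReal (2 ^ (m - 1) / 2 * (1 / 2) ^ l) := by
          refine ENNReal.tsum_le_tsum fun l => (mul_le_of_le_one_right' (hu _)).trans (le_of_eq ?_)
          rw [zpow_add₀ h2, zpow_neg, zpow_add₀ h2, zpow_natCast, zpow_one, one_div, inv_pow]
          congr 1; field_simp
      _ = _ := by
          rw [ENNReal.tsum_ofReal_mul_geometric (by positivity) (by norm_num) (by norm_num)]
          congr 1; ring
  refine (add_le_add hpos hneg).trans (le_of_eq ?_)
  rw [← ENNReal.ofReal_add (by positivity) (by positivity), zpow_sub_one₀ h2]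
  congr 1; ring

lemma hContent_maximalH_gt_le {n : ℕ} {γ β σ : ℝ} (hγ : 0 < γ) (hγβ : γ < β) (hσ : 0 < σ)
    (hσ2 : 2 * σ < 1) (g : Rn n → ℝ≥0∞) (m : ℤ) :
    hContent n γ {x | ENNReal.ofReal (2 ^ m) < maximalH n β g x} ≤
      ∑' l : ℕ, ENNReal.ofReal (2 * 11 ^ γ * (1 - 2 * σ) ^ (-(γ / β)) * (σ ^ (-(γ / β))) ^ l) *
        hContent n γ {x | ENNReal.ofReal (2 ^ (m - 1 + (l : ℤ))) < g x} := by
  have hβ : 0 < β := hγ.trans hγβ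
  have hσ1 : 0 < 1 - 2 * σ := by linarith
  calc hContent n γ {x | ENNReal.ofReal (2 ^ m) < maximalH n β g x}
      ≤ hContent n γ (⋃ l : ℕ, {x | ENNReal.ofReal ((1 - 2 * σ) * σ ^ l) <
          setMaximal n β {y | ENNReal.ofReal (2 ^ (m - 1 + (l : ℤ))) < g y} x}) := by
        refine hContent_mono fun x hx => ?_
        obtain ⟨l, hl⟩ := exists_lt_of_lt_tsum_zpow (fun k => setMaximal_le_one hβ _ x) hσ hσ2
          (lt_of_lt_of_le hx (maximalH_le_tsum n β g x))
        exact mem_iUnion.2 ⟨l, hl⟩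
    _ ≤ _ := hContent_iUnion_le hγ _
    _ ≤ _ := by
        refine ENNReal.tsum_le_tsum fun l => ?_
        have hl : (1 - 2 * σ) * σ ^ l ≤ 1 :=
          mul_le_one₀ (by linarith) (by positivity) (pow_le_one₀ hσ.le (by linarith))
        refine (hContent_setMaximal_gt_le hγ hγβ _ (by positivity) hl).trans (le_of_eq ?_)
        rw [Real.mul_rpow hσ1.le (by positivity), ← Real.rpow_natCast, ← Real.rpow_natCast,
          ← Real.rpow_mul hσ.le, ← Real.rpow_mul hσ.le, mul_comm (l : ℝ), mul_assoc, mul_assoc,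
          mul_assoc]

lemma ENNReal.ofReal_zpow_rpow_lt_rpow_iff {p : ℝ} (hp : 0 < p) (m : ℤ) (y : ℝ≥0∞) :
    ENNReal.ofReal (((2 : ℝ) ^ p) ^ m) < y ^ p ↔ ENNReal.ofReal (2 ^ m) < y := by
  rw [← ENNReal.rpow_lt_rpow_iff hp (x := ENNReal.ofReal (2 ^ m)),
    ENNReal.ofReal_rpow_of_nonneg (by positivity) hp.le, ← Real.rpow_intCast, ← Real.rpow_intCast,
    ← Real.rpow_mul zero_le_two, ← Real.rpow_mul zero_le_two, mul_comm]

lemma antitone_hContent_superlevel (n : ℕ) (γ : ℝ) (g : Rn n → ℝ≥0∞) :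
    Antitone fun t : ℝ => hContent n γ {x | ENNReal.ofReal t < g x} := fun _ _ hst =>
  hContent_mono fun _ hx => (ENNReal.ofReal_le_ofReal hst).trans_lt hx

lemma tsum_tsum_eq_mul_tsum {a b K : ℝ} (ha : 0 < a) (hb : 0 ≤ b) (hba : b < a) (hK : 0 ≤ K)
    {d : ℝ} (hd : 0 ≤ d) (h : ℤ → ℝ≥0∞) :
    ∑' m : ℤ, ENNReal.ofReal (a ^ m * d) *
        ∑' l : ℕ, ENNReal.ofReal (K * b ^ l) * h (m - 1 + l) =
      ENNReal.ofReal (K * a ^ 2 / (1 - b / a)) *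
        ∑' k : ℤ, ENNReal.ofReal (a ^ k * d) * h (k + 1) := by
  simp only [← ENNReal.tsum_mul_left (a := ENNReal.ofReal (a ^ (_ : ℤ) * d))]
  rw [ENNReal.tsum_comm, ← ENNReal.tsum_ofReal_mul_geometric (by positivity) (by positivity)
    ((div_lt_one ha).2 hba), ← ENNReal.tsum_mul_right]
  refine tsum_congr fun l => ?_
  rw [← (Equiv.addRight (2 - (l : ℤ))).tsum_eq, ← ENNReal.tsum_mul_left]
  refine tsum_congr fun k => ?_
  simp only [Equiv.coe_addRight]
  rw [← mul_assoc, ← mul_assoc, ← ENNReal.ofReal_mul (by positivity),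
    ← ENNReal.ofReal_mul (by positivity)]
  congr 2
  · rw [zpow_add₀ ha.ne', zpow_sub₀ ha.ne', zpow_natCast, div_pow]
    field_simp
  · ring

/-- Strong-type bound for `p > γ/β`:
`∫ (M_{H^β_∞} f)^p dH^γ_∞ ≤ C ∫ |f|^p dH^γ_∞` for `f ∈ L^p(H^γ_∞)`. -/
theorem statement10 (n : ℕ) (γ β p : ℝ) (hγ : 0 < γ) (hγβ : γ < β) (hβn : β ≤ n)
    (hp : γ / β < p) :
    ∃ C : ℝ, 0 < C ∧ ∀ f : Rn n → ℝ, MemChoquetLp (hContent n γ) p f →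
      choquet (hContent n γ)
          (fun x => (maximalH n β (fun y => ENNReal.ofReal |f y|) x) ^ p) ≤
        ENNReal.ofReal C * choquet (hContent n γ) (fun x => ENNReal.ofReal |f x| ^ p) := by
  have hβ : 0 < β := hγ.trans hγβ
  have hq : 0 < γ / β := by positivity
  have hp0 : 0 < p := hq.trans hp
  set q := γ / β
  let σ : ℝ := 2 ^ (-((p + q) / (2 * q)))
  have hσ : 0 < σ := by positivity
  have hσ2 : 2 * σ < 1 := by
    have h1 : 1 < (p + q) / (2 * q) := by rw [one_lt_div (by positivity)]; linarith
    calc 2 * σ < 2 * 2 ^ (-1 : ℝ) := by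
          have : σ < 2 ^ (-1 : ℝ) := Real.rpow_lt_rpow_of_exponent_lt one_lt_two (neg_lt_neg h1)
          linarith
      _ = 1 := by rw [Real.rpow_neg_one]; norm_num
  have hσ1 : 0 < 1 - 2 * σ := by linarith
  have ha : 1 < (2 : ℝ) ^ p := Real.one_lt_rpow one_lt_two hp0
  have hb : σ ^ (-q) < (2 : ℝ) ^ p := by
    rw [← Real.rpow_mul zero_le_two]
    refine Real.rpow_lt_rpow_of_exponent_lt one_lt_two ?_
    have : -((p + q) / (2 * q)) * -q = (p + q) / 2 := by field_simp
    linarith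
  have ha0 : (0 : ℝ) < 2 ^ p := by positivity
  have hb0 : 0 < σ ^ (-q) := by positivity
  have hden : 0 < 1 - σ ^ (-q) / 2 ^ p := sub_pos.2 ((div_lt_one ha0).2 hb)
  refine ⟨2 * 11 ^ γ * (1 - 2 * σ) ^ (-q) * ((2 : ℝ) ^ p) ^ 2 / (1 - σ ^ (-q) / 2 ^ p),
    by positivity, fun f _ => ?_⟩
  set g : Rn n → ℝ≥0∞ := fun y => ENNReal.ofReal |f y|
  have hlower : ∑' k : ℤ, ENNReal.ofReal (((2 : ℝ) ^ p) ^ k * (2 ^ p - 1)) *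
      hContent n γ {x | ENNReal.ofReal (2 ^ (k + 1)) < g x} ≤
        choquet (hContent n γ) (fun x => g x ^ p) := by
    refine le_trans (le_of_eq (tsum_congr fun k => ?_))
      (tsum_le_setLIntegral_Ioi (antitone_hContent_superlevel n γ fun x => g x ^ p) ha)
    simp only [ENNReal.ofReal_zpow_rpow_lt_rpow_iff hp0]
  refine le_trans ?_ (mul_le_mul_right hlower _)
  rw [← tsum_tsum_eq_mul_tsum ha0 hb0.le hb (by positivity) (by linarith)
    fun k => hContent n γ {x | ENNReal.ofReal (2 ^ k) < g x}]
  refine (setLIntegral_Ioi_le_tsum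
    (antitone_hContent_superlevel n γ fun x => maximalH n β g x ^ p) ha).trans ?_
  refine ENNReal.tsum_le_tsum fun m => mul_le_mul_right ?_ _
  simp only [ENNReal.ofReal_zpow_rpow_lt_rpow_iff hp0]
  exact hContent_maximalH_gt_le hγ hγβ hσ hσ2 g m

end
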